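/- Let q : ℝ → ℝ^d, φ : ℝ^d → ℝ^m, and f : ℝ^m → ℝ be C^∞, fix an integer k ≥ 1 and a time t ∈ ℝ, and define H(h), H_GN(h) as below. Then the difference between the true Hessian block and the Gauss-Newton Hessian block converges as h → 0⁺ to the contraction of the second derivative of φ with the kinematic limit of the gradients: lim_{h → 0⁺} ( H(h) − H_GN(h) ) = D²φ(q(t)) · [ (−1)^k · (d/dt)^k ( ∇f(z^{(k)}(t)) ) ]. In particular, H(h) − H_GN(h) remains bounded as h → 0⁺. -/

import Mathlib

/-!
STATEMENT 2: With smooth `q, φ, f`, `k ≥ 1`, `t ∈ ℝ`, clique values `v_i(h)` as in the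
context, true Hessian block `H(h)` and Gauss-Newton block `H_GN(h)`, we have
`lim_{h→0⁺} (H(h) - H_GN(h)) = D²φ(q(t)) · [(-1)^k (d/dt)^k (∇f(z^{(k)}(t)))]`.
In particular `H(h) - H_GN(h)` remains bounded as `h → 0⁺`.
-/

open Filter Set Matrix

/-- Componentwise gradient of `f : ℝ^m → ℝ`. -/
noncomputable def grad {m : ℕ} (f : (Fin m → ℝ) → ℝ) (v : Fin m → ℝ) : Fin m → ℝ :=
  fun a => fderiv ℝ f v (Pi.single a 1)

/-- Hessian matrix of `f : ℝ^m → ℝ` at `v`. -/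
noncomputable def hess {m : ℕ} (f : (Fin m → ℝ) → ℝ) (v : Fin m → ℝ) :
    Matrix (Fin m) (Fin m) ℝ :=
  Matrix.of fun a b => fderiv ℝ (fun x => fderiv ℝ f x (Pi.single b 1)) v (Pi.single a 1)

/-- Jacobian matrix of `φ : ℝ^d → ℝ^m` at `x`. -/
noncomputable def jac {d m : ℕ} (φ : (Fin d → ℝ) → (Fin m → ℝ)) (x : Fin d → ℝ) :
    Matrix (Fin m) (Fin d) ℝ :=
  Matrix.of fun a p => fderiv ℝ φ x (Pi.single p 1) a

/-- Contraction `D²φ(x) · w = ∑_α w_α ∇²φ_α(x)` of the second derivative of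
`φ : ℝ^d → ℝ^m` with a vector `w ∈ ℝ^m`. -/
noncomputable def d2Contract {d m : ℕ} (φ : (Fin d → ℝ) → (Fin m → ℝ)) (x : Fin d → ℝ)
    (w : Fin m → ℝ) : Matrix (Fin d) (Fin d) ℝ :=
  ∑ a : Fin m, w a • hess (fun y => φ y a) x

/-- Frobenius norm of a square matrix. -/
noncomputable def frob {d : ℕ} (A : Matrix (Fin d) (Fin d) ℝ) : ℝ :=
  Real.sqrt (∑ p : Fin d, ∑ r : Fin d, (A p r) ^ 2)


theorem aux_contDiff_integral_nat (n : ℕ) : ∀ {E : Type} [NormedAddCommGroup E]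
    [NormedSpace ℝ E] [CompleteSpace E] (F : (ℝ × ℝ) × ℝ → E) (_ : ContDiff ℝ n F),
    ContDiff ℝ n (fun x : ℝ × ℝ => ∫ u in (0:ℝ)..1, F (x, u)) := by
  induction n with
  | zero =>
    intro E _ _ _ F hF
    have hc : Continuous F := hF.continuous
    refine contDiff_zero.2 ?_
    exact intervalIntegral.continuous_parametric_intervalIntegral_of_continuous' (f := fun x u => F (x, u)) (by simpa [Function.uncurry_def] using hc) 0 1
  | succ n ih =>
    intro E _ _ _ F hF
    have hF1 : ContDiff ℝ n (fderiv ℝ F) := hF.fderiv_right (by norm_cast)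
    have hdiff : Differentiable ℝ F := hF.differentiable (by norm_cast)
    set F' : (ℝ × ℝ) × ℝ → ((ℝ × ℝ) →L[ℝ] E) :=
      fun p => (fderiv ℝ F p).comp (ContinuousLinearMap.inl ℝ (ℝ × ℝ) ℝ) with hF'
    have hF'c : ContDiff ℝ n F' := hF1.clm_comp contDiff_const
    refine (contDiff_succ_iff_hasFDerivAt (n := n)).2 ⟨fun x => ∫ u in (0:ℝ)..1, F' (x, u), ih F' hF'c, ?_⟩
    intro x
    have hcF : Continuous F := hF.continuous
    have hcF' : Continuous F' := hF'c.continuous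
    obtain ⟨C, hC⟩ := ((isCompact_closedBall x 1).prod (isCompact_Icc (a := (0:ℝ)) (b := 1))).exists_bound_of_continuousOn hcF'.continuousOn
    refine intervalIntegral.hasFDerivAt_integral_of_dominated_of_fderiv_le (F := fun x u => F (x, u)) (F' := fun x u => F' (x, u)) (bound := fun _ => C)
      (Metric.ball_mem_nhds x one_pos) ?_ ?_ ?_ ?_ ?_ ?_
    · exact Eventually.of_forall fun y => Continuous.aestronglyMeasurable (by fun_prop)
    · exact Continuous.intervalIntegrable (by fun_prop) _ _
    · exact Continuous.aestronglyMeasurable (by fun_prop)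
    · refine Eventually.of_forall fun u hu y hy => hC _ ⟨Metric.ball_subset_closedBall hy, ?_⟩
      rw [uIoc_of_le zero_le_one] at hu
      exact Ioc_subset_Icc_self hu
    · exact intervalIntegrable_const
    · refine Eventually.of_forall fun u hu y hy => ?_
      exact (hdiff (y, u)).hasFDerivAt.comp y (hasFDerivAt_prodMk_left y u)

theorem aux_contDiff_integral {E : Type} [NormedAddCommGroup E]
    [NormedSpace ℝ E] [CompleteSpace E] (F : (ℝ × ℝ) × ℝ → E) (hF : ContDiff ℝ (⊤ : ℕ∞) F) :
    ContDiff ℝ (⊤ : ℕ∞) (fun x : ℝ × ℝ => ∫ u in (0:ℝ)..1, F (x, u)) :=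
  contDiff_infty.2 fun n => aux_contDiff_integral_nat n F (contDiff_infty.1 hF n)

noncomputable def avgOp {E : Type} [NormedAddCommGroup E] [NormedSpace ℝ E]
    (P : ℝ × ℝ → E) (p : ℝ × ℝ) : E :=
  ∫ u in (0:ℝ)..1, fderiv ℝ P (p.1, p.2 + u * p.1) (0, 1)

section
variable {E : Type} [NormedAddCommGroup E] [NormedSpace ℝ E] [CompleteSpace E]

theorem avgOp_contDiff {P : ℝ × ℝ → E} (hP : ContDiff ℝ (⊤ : ℕ∞) P) :
    ContDiff ℝ (⊤ : ℕ∞) (avgOp P) := by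
  refine aux_contDiff_integral (fun x => fderiv ℝ P (x.1.1, x.1.2 + x.2 * x.1.1) (0, 1)) ?_
  have h1 : ContDiff ℝ (⊤ : ℕ∞) (fderiv ℝ P) := hP.fderiv_right (by simp)
  exact (h1.comp (by fun_prop)).clm_apply contDiff_const

theorem hasDerivAt_slice {E : Type} [NormedAddCommGroup E] [NormedSpace ℝ E] {P : ℝ × ℝ → E} (hP : ContDiff ℝ (⊤ : ℕ∞) P) (h s : ℝ) :
    HasDerivAt (fun s => P (h, s)) (fderiv ℝ P (h, s) (0, 1)) s := by
  have h1 := (hP.differentiable (by simp) (h, s)).hasFDerivAt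
  exact h1.comp_hasDerivAt s ((hasDerivAt_const s h).prodMk (hasDerivAt_id s))

theorem avgOp_zero {P : ℝ × ℝ → E} (hP : ContDiff ℝ (⊤ : ℕ∞) P) (s : ℝ) :
    avgOp P (0, s) = deriv (fun s => P (0, s)) s := by
  simp [avgOp, (hasDerivAt_slice hP 0 s).deriv]

theorem smul_avgOp {P : ℝ × ℝ → E} (hP : ContDiff ℝ (⊤ : ℕ∞) P) (h s : ℝ) :
    h • avgOp P (h, s) = P (h, s + h) - P (h, s) := by
  have h1 : ContDiff ℝ (⊤ : ℕ∞) (fderiv ℝ P) := hP.fderiv_right (by simp)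
  have hc := h1.continuous
  have := intervalIntegral.integral_eq_sub_of_hasDerivAt (a := (0:ℝ)) (b := 1)
    (f := fun u => P (h, s + u * h)) (f' := fun u => h • fderiv ℝ P (h, s + u * h) (0, 1))
    (fun u _ => by
      have h2 : HasDerivAt (fun u : ℝ => s + u * h) h u := by
        simpa using ((hasDerivAt_id u).mul_const h).const_add s
      exact (hasDerivAt_slice hP h (s + u * h)).scomp u h2)
    (Continuous.intervalIntegrable (by fun_prop) _ _)
  rw [intervalIntegral.integral_smul] at this
  simpa [avgOp] using this

theorem avgOp_iter_contDiff {P : ℝ × ℝ → E} (hP : ContDiff ℝ (⊤ : ℕ∞) P) (n : ℕ) :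
    ContDiff ℝ (⊤ : ℕ∞) (avgOp^[n] P) := by
  induction n with
  | zero => exact hP
  | succ n ih => rw [Function.iterate_succ_apply']; exact avgOp_contDiff ih

theorem avgOp_iter_zero {P : ℝ × ℝ → E} (hP : ContDiff ℝ (⊤ : ℕ∞) P) (n : ℕ) (s : ℝ) :
    (avgOp^[n] P) (0, s) = iteratedDeriv n (fun s => P (0, s)) s := by
  induction n generalizing s with
  | zero => simp
  | succ n ih =>
    rw [Function.iterate_succ_apply', avgOp_zero (avgOp_iter_contDiff hP n), iteratedDeriv_succ]
    congr 1
    exact funext ih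

theorem pow_smul_avgOp_iter {P : ℝ × ℝ → E} (hP : ContDiff ℝ (⊤ : ℕ∞) P) (n : ℕ) (h s : ℝ) :
    h ^ n • (avgOp^[n] P) (h, s) = ((fwdDiff h)^[n] (fun s => P (h, s))) s := by
  induction n generalizing s with
  | zero => simp
  | succ n ih =>
    rw [Function.iterate_succ_apply', Function.iterate_succ_apply', pow_succ, mul_smul,
      smul_avgOp (avgOp_iter_contDiff hP n), smul_sub, ih, ih]
    rfl

theorem avgOp_iter_eq_sum {P : ℝ × ℝ → E} (hP : ContDiff ℝ (⊤ : ℕ∞) P) (n : ℕ) {h : ℝ}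
    (hh : h ≠ 0) (s : ℝ) :
    (avgOp^[n] P) (h, s) = (h ^ n)⁻¹ • ∑ j ∈ Finset.range (n + 1),
      ((-1 : ℝ) ^ (n - j) * (n.choose j : ℝ)) • P (h, s + j * h) := by
  rw [eq_inv_smul_iff₀ (pow_ne_zero _ hh), pow_smul_avgOp_iter hP, fwdDiff_iter_eq_sum_shift]
  refine Finset.sum_congr rfl fun j _ => ?_
  rw [← Int.cast_smul_eq_zsmul ℝ]
  simp
end

theorem grad_contDiff {m : ℕ} {f : (Fin m → ℝ) → ℝ} (hf : ContDiff ℝ (⊤ : ℕ∞) f) :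
    ContDiff ℝ (⊤ : ℕ∞) (grad f) := by
  have h1 : ContDiff ℝ (⊤ : ℕ∞) (fderiv ℝ f) := hf.fderiv_right (by simp)
  exact contDiff_pi.2 fun a => h1.clm_apply contDiff_const

theorem d2Contract_sum_smul {d m : ℕ} (φ : (Fin d → ℝ) → (Fin m → ℝ)) (x : Fin d → ℝ)
    (s : Finset ℕ) (c : ℕ → ℝ) (w : ℕ → Fin m → ℝ) :
    d2Contract φ x (∑ i ∈ s, c i • w i) = ∑ i ∈ s, c i • d2Contract φ x (w i) := by
  simp only [d2Contract, Finset.sum_apply, Pi.smul_apply, smul_eq_mul, Finset.sum_smul,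
    Finset.smul_sum, mul_smul]
  rw [Finset.sum_comm]

theorem d2Contract_continuous {d m : ℕ} (φ : (Fin d → ℝ) → (Fin m → ℝ)) (x : Fin d → ℝ) :
    Continuous (d2Contract φ x) := by
  unfold d2Contract
  fun_prop

theorem frob_continuous {d : ℕ} : Continuous (frob (d := d)) := by
  unfold frob
  fun_prop

theorem hessian_minus_gaussNewton_tendsto_curvature_correction
    {d m : ℕ} (q : ℝ → (Fin d → ℝ)) (φ : (Fin d → ℝ) → (Fin m → ℝ))
    (f : (Fin m → ℝ) → ℝ)
    (hq : ContDiff ℝ (⊤ : ℕ∞) q) (hφ : ContDiff ℝ (⊤ : ℕ∞) φ) (hf : ContDiff ℝ (⊤ : ℕ∞) f)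
    (k : ℕ) (hk : 1 ≤ k) (t : ℝ)
    (z : ℝ → Fin m → ℝ) (hz : z = fun s => φ (q s))
    (σ : ℕ → ℝ) (hσ : ∀ j, σ j = (-1 : ℝ) ^ (k - j) * (k.choose j : ℝ))
    (v : ℕ → ℝ → Fin m → ℝ)
    (hv : ∀ i h, v i h =
      (h ^ k)⁻¹ •
        ∑ j ∈ Finset.range (k + 1), σ j • z (t + ((j : ℝ) - ((k : ℝ) - (i : ℝ))) * h))
    (H HGN : ℝ → Matrix (Fin d) (Fin d) ℝ)
    (hH : ∀ h, H h =
      ∑ i ∈ Finset.range (k + 1),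
        (((σ (k - i)) ^ 2 / h ^ (2 * k)) •
            ((jac φ (q t))ᵀ * hess f (v i h) * jac φ (q t)) +
          (σ (k - i) / h ^ k) • d2Contract φ (q t) (grad f (v i h))))
    (hHGN : ∀ h, HGN h =
      ∑ i ∈ Finset.range (k + 1),
        ((σ (k - i)) ^ 2 / h ^ (2 * k)) •
          ((jac φ (q t))ᵀ * hess f (v i h) * jac φ (q t))) :
    Tendsto (fun h : ℝ => H h - HGN h) (nhdsWithin 0 (Ioi 0))
      (nhds (d2Contract φ (q t)
        ((-1 : ℝ) ^ k • iteratedDeriv k (fun s => grad f (iteratedDeriv k z s)) t))) ∧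
    ∃ C h₀ : ℝ, 0 < h₀ ∧ ∀ h : ℝ, 0 < h → h < h₀ → frob (H h - HGN h) ≤ C := by
  have hzs : ContDiff ℝ (⊤ : ℕ∞) z := by rw [hz]; exact hφ.comp hq
  have hP : ContDiff ℝ (⊤ : ℕ∞) (fun p : ℝ × ℝ => z p.2) := hzs.comp contDiff_snd
  set W : ℝ × ℝ → Fin m → ℝ := avgOp^[k] (fun p : ℝ × ℝ => z p.2) with hW
  have hWs : ContDiff ℝ (⊤ : ℕ∞) W := avgOp_iter_contDiff hP k
  set Q : ℝ × ℝ → Fin m → ℝ := fun p => grad f (W (-p.1, p.2)) with hQ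
  have hQs : ContDiff ℝ (⊤ : ℕ∞) Q :=
    (grad_contDiff hf).comp (hWs.comp (by fun_prop))
  have hRs := avgOp_iter_contDiff hQs k
  have hQ0 : (fun s => Q (0, s)) = fun s => grad f (iteratedDeriv k z s) := by
    funext s
    simp only [hQ, neg_zero, hW, avgOp_iter_zero hP]
  have hR0 := avgOp_iter_zero hQs k t
  rw [hQ0] at hR0
  have hvW : ∀ j ∈ Finset.range (k + 1), ∀ h : ℝ, h ≠ 0 → v (k - j) h = W (h, t + j * -h) := by
    intro j hj h hh
    have hj' : j ≤ k := Nat.lt_succ_iff.1 (Finset.mem_range.1 hj)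
    rw [hv, hW, avgOp_iter_eq_sum hP k hh]
    congr 1
    refine Finset.sum_congr rfl fun l _ => ?_
    rw [hσ]
    congr 2
    push_cast [hj']
    ring
  have key : ∀ h : ℝ, 0 < h →
      H h - HGN h = d2Contract φ (q t) ((-1 : ℝ) ^ k • (avgOp^[k] Q) (-h, t)) := by
    intro h hh
    rw [hH, hHGN, Finset.sum_add_distrib, add_sub_cancel_left, ← d2Contract_sum_smul]
    congr 1
    rw [avgOp_iter_eq_sum hQs k (neg_ne_zero.2 hh.ne'), smul_smul,
      ← Finset.sum_range_reflect, Finset.smul_sum]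
    refine Finset.sum_congr rfl fun j hj => ?_
    have hj' : j ≤ k := Nat.lt_succ_iff.1 (Finset.mem_range.1 hj)
    have e1 : k + 1 - 1 - j = k - j := by omega
    have e2 : k - (k - j) = j := by omega
    rw [e1, e2, hvW j hj h hh.ne', hσ, smul_smul]
    simp only [hQ, neg_neg]
    congr 1
    have hu : (-1 : ℝ) ^ k ≠ 0 := pow_ne_zero _ (by norm_num)
    rw [neg_pow h, mul_inv, mul_inv_cancel_left₀ hu]
    ring
  have hT : Tendsto (fun h : ℝ => H h - HGN h) (nhdsWithin 0 (Ioi 0))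
      (nhds (d2Contract φ (q t)
        ((-1 : ℝ) ^ k • iteratedDeriv k (fun s => grad f (iteratedDeriv k z s)) t))) := by
    have hc : Continuous fun h : ℝ =>
        d2Contract φ (q t) ((-1 : ℝ) ^ k • (avgOp^[k] Q) (-h, t)) := by
      have h1 := d2Contract_continuous φ (q t)
      have h2 := hRs.continuous
      fun_prop
    have h3 := (hc.tendsto 0).mono_left (nhdsWithin_le_nhds (s := Ioi (0:ℝ)))
    rw [neg_zero, hR0] at h3
    refine h3.congr' ?_
    filter_upwards [self_mem_nhdsWithin] with h hh
    exact (key h hh).symm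
  refine ⟨hT, ?_⟩
  have hb := (frob_continuous.tendsto _).comp hT
  have hev := hb.eventually (eventually_le_nhds (lt_add_one _))
  obtain ⟨h₀, h₀pos, hsub⟩ := mem_nhdsGT_iff_exists_Ioo_subset.1 hev
  exact ⟨_, h₀, h₀pos, fun h hpos hlt => hsub ⟨hpos, hlt⟩⟩
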